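/- Let φ ∈ Γ₀(H) satisfy φ*(H) ⊂ (−∞,0] ∪ {+∞} and (φ*)⁻¹((−∞,0)) ≠ ∅, let s ∈ Γ₀(G) be such that S = s⁻¹((0,+∞)) ≠ ∅, let γ ∈ (0,+∞), and let (x,y) ∈ Ξ₃. Then the unique η ∈ [0,+∞) satisfying φ*( prox_{((1/γ)·s_▲(prox_{(γη)⊙s_▲} y))⊙φ*}(x/γ) ) + η = 0 equals −φ*(proj_{cl dom φ*}(x/γ)) > 0, and prox_{γ(φ▷s)}(x,y) = ( x − γ·proj_{cl dom φ*}(x/γ), prox_{(−γ·φ*(proj_{cl dom φ*}(x/γ)))·s_▲} y ). -/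

import Mathlib

open scoped Classical

noncomputable section

/-- Effective domain of an extended-real-valued function. -/
def edom {E : Type*} (f : E → EReal) : Set E := {x | f x < ⊤}

/-- Convexity of an extended-real-valued function, via its epigraph. -/
def ConvexEpi {E : Type*} [AddCommGroup E] [Module ℝ E] (f : E → EReal) : Prop :=
  Convex ℝ {p : E × ℝ | f p.1 ≤ (p.2 : EReal)}

/-- `f ∈ Γ₀(E)`: proper, lower semicontinuous, convex, with values in `(-∞, +∞]`. -/
def IsGamma0 {E : Type*} [AddCommGroup E] [Module ℝ E] [TopologicalSpace E]
    (f : E → EReal) : Prop :=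
  (∃ x, f x ≠ ⊤) ∧ (∀ x, f x ≠ ⊥) ∧ LowerSemicontinuous f ∧ ConvexEpi f

/-- Proximity operator: the (unique, for `f ∈ Γ₀`) minimizer of
`y ↦ f y + ‖x - y‖² / 2`. -/
def prox {E : Type*} [NormedAddCommGroup E] [InnerProductSpace ℝ E]
    (f : E → EReal) (x : E) : E :=
  Classical.epsilon fun p =>
    ∀ y, f p + ((‖x - p‖ ^ 2 / 2 : ℝ) : EReal) ≤ f y + ((‖x - y‖ ^ 2 / 2 : ℝ) : EReal)

/-- Metric projection onto a set. -/
def projC {E : Type*} [NormedAddCommGroup E] (C : Set E) (x : E) : E :=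
  Classical.epsilon fun p => p ∈ C ∧ ∀ y ∈ C, ‖x - p‖ ≤ ‖x - y‖

/-- Fenchel conjugate. -/
def fconj {E : Type*} [NormedAddCommGroup E] [InnerProductSpace ℝ E]
    (f : E → EReal) (y : E) : EReal :=
  ⨆ x, ((inner ℝ x y : ℝ) : EReal) - f x

/-- Plain scalar multiple `ξ·f`. -/
def smulE {E : Type*} (ξ : ℝ) (f : E → EReal) : E → EReal := fun x => (ξ : EReal) * f x

/-- The operation `ξ ⊙ f`: indicator of `cl (dom f)` if `ξ = 0`, and `ξ·f` if `ξ > 0`. -/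
def rscale {E : Type*} [TopologicalSpace E] (ξ : ℝ) (f : E → EReal) : E → EReal :=
  if ξ = 0 then fun x => if x ∈ closure (edom f) then (0 : EReal) else ⊤
  else fun x => (ξ : EReal) * f x

/-- `f^∨`: agrees with `f` where `-∞ < f < 0`, and is `+∞` elsewhere. -/
def pbas {E : Type*} (f : E → EReal) : E → EReal :=
  fun x => if ⊥ < f x ∧ f x < 0 then f x else ⊤

/-- `f^∧`: agrees with `f` where `0 < f < +∞`, and is `+∞` elsewhere. -/
def phaut {E : Type*} (f : E → EReal) : E → EReal :=
  fun x => if 0 < f x ∧ f x < ⊤ then f x else ⊤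

/-- `f_▽ = (f^∨)**`. -/
def basEnv {E : Type*} [NormedAddCommGroup E] [InnerProductSpace ℝ E]
    (f : E → EReal) : E → EReal :=
  fconj (fconj (pbas f))

/-- `f_▲ = (f^∧)**`. -/
def hautEnv {E : Type*} [NormedAddCommGroup E] [InnerProductSpace ℝ E]
    (f : E → EReal) : E → EReal :=
  fconj (fconj (phaut f))

/-- `S = s⁻¹((0, +∞))`. -/
def sdom {G : Type*} (s : G → EReal) : Set G := {v | 0 < s v ∧ s v < ⊤}

/-- The preperspective `φ ⋉ s`, on the Hilbert direct sum `H ⊕ G`. -/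
def prePersp {H G : Type*} [NormedAddCommGroup H] [InnerProductSpace ℝ H]
    [NormedAddCommGroup G] [InnerProductSpace ℝ G]
    (φ : H → EReal) (s : G → EReal) : WithLp 2 (H × G) → EReal := fun q =>
  if 0 < s ((WithLp.equiv 2 (H × G)) q).2 ∧ s ((WithLp.equiv 2 (H × G)) q).2 < ⊤ then
    s ((WithLp.equiv 2 (H × G)) q).2 *
      φ ((s ((WithLp.equiv 2 (H × G)) q).2).toReal⁻¹ • ((WithLp.equiv 2 (H × G)) q).1)
  else ⊤

/-- The perspective `φ ▷ s`: the largest lower semicontinuous convex minorant of the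
preperspective `φ ⋉ s`, on the Hilbert direct sum `H ⊕ G`. -/
def persp {H G : Type*} [NormedAddCommGroup H] [InnerProductSpace ℝ H]
    [NormedAddCommGroup G] [InnerProductSpace ℝ G]
    (φ : H → EReal) (s : G → EReal) : WithLp 2 (H × G) → EReal := fun q =>
  sSup {t : EReal | ∃ g : WithLp 2 (H × G) → EReal,
    LowerSemicontinuous g ∧ ConvexEpi g ∧ (∀ r, g r ≤ prePersp φ s r) ∧ t = g q}

/-- The point `(x, y)` in the Hilbert direct sum `H ⊕ G`. -/
def pairHG {H G : Type*} (x : H) (y : G) : WithLp 2 (H × G) :=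
  (WithLp.equiv 2 (H × G)).symm (x, y)

end
noncomputable section

/-- `Ξ₁` of Proposition 4.3. -/
def Xi1 {H G : Type*} [NormedAddCommGroup H] [InnerProductSpace ℝ H]
    [NormedAddCommGroup G] [InnerProductSpace ℝ G]
    (φ : H → EReal) (s : G → EReal) (γ : ℝ) : Set (H × G) :=
  {p | hautEnv s (projC (closure (convexHull ℝ (sdom s))) p.2) = 0 ∧
       fconj φ (projC (closure (edom (fconj φ))) (γ⁻¹ • p.1)) = 0}

/-- `Ξ₂` of Proposition 4.3. -/
def Xi2 {H G : Type*} [NormedAddCommGroup H] [InnerProductSpace ℝ H]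
    [NormedAddCommGroup G] [InnerProductSpace ℝ G]
    (φ : H → EReal) (s : G → EReal) (γ : ℝ) : Set (H × G) :=
  {p | (0 < hautEnv s (projC (closure (convexHull ℝ (sdom s))) p.2) ∧
        hautEnv s (projC (closure (convexHull ℝ (sdom s))) p.2) < ⊤) ∧
       fconj φ (prox (smulE (γ⁻¹ * (hautEnv s (projC (closure (convexHull ℝ (sdom s))) p.2)).toReal)
          (fconj φ)) (γ⁻¹ • p.1)) = 0}

/-- `Ξ₃` of Proposition 4.3. -/
def Xi3 {H G : Type*} [NormedAddCommGroup H] [InnerProductSpace ℝ H]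
    [NormedAddCommGroup G] [InnerProductSpace ℝ G]
    (φ : H → EReal) (s : G → EReal) (γ : ℝ) : Set (H × G) :=
  {p | hautEnv s (prox (smulE (γ * (-(fconj φ (projC (closure (edom (fconj φ))) (γ⁻¹ • p.1)))).toReal)
          (hautEnv s)) p.2) = 0 ∧
       fconj φ (projC (closure (edom (fconj φ))) (γ⁻¹ • p.1)) < 0}

/-- The equation (4.4) for `η` in Theorem 4.1(iii). -/
def eta9eq {H G : Type*} [NormedAddCommGroup H] [InnerProductSpace ℝ H]
    [NormedAddCommGroup G] [InnerProductSpace ℝ G]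
    (φ : H → EReal) (s : G → EReal) (γ : ℝ) (x : H) (y : G) (η : ℝ) : Prop :=
  fconj φ (prox (rscale (γ⁻¹ * (hautEnv s (prox (rscale (γ * η) (hautEnv s)) y)).toReal)
      (fconj φ)) (γ⁻¹ • x)) + (η : EReal) = 0

end

/-!
Write `p` for the projection of `γ⁻¹ • x` onto `cl dom φ*`, `μ = -φ*(p)`, `q` for the proximal point
of `y` and `w = x - γ • p`. By Fenchel–Young together with the subgradient inequality of `μ • s_▲` at
`q`, the functional `⟪(p, γ⁻¹ • (y - q)), · - (0, q)⟫` minorizes `φ ⋉ s`, hence `φ ▷ s`. At `(w, q)`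
it takes the value `⟪w, p⟫`, and this value is attained: `⟪w, p⟫` bounds `⟪w, ·⟫` on `dom φ*`, so it
controls the growth of `φ` in the direction `w`, and since `s_▲ q = 0` one can approach `(w, q)` by
convex combinations of points of `dom (φ ⋉ s)` with vanishing scale. Thus `(p, γ⁻¹ • (y - q))` is a
subgradient of `φ ▷ s` at `(w, q)`, which characterizes the proximal point. Uniqueness of `η` follows
from the monotonicity of `ξ ↦ f (prox_{ξ ⊙ f} x)`.
-/

open Filter Set Topology RealInnerProductSpace

section RealEpigraph

/-- The epigraph of `f` with real heights, the set whose convexity is `ConvexEpi f`. It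
turns statements about `f` into statements about real numbers. -/
def realEpi {E : Type*} (f : E → EReal) : Set (E × ℝ) := {p | f p.1 ≤ (p.2 : EReal)}

theorem mem_realEpi {E : Type*} {f : E → EReal} {v : E} {t : ℝ} :
    (v, t) ∈ realEpi f ↔ f v ≤ (t : EReal) := Iff.rfl

theorem mem_edom {E : Type*} {f : E → EReal} {v : E} : v ∈ edom f ↔ f v < ⊤ := Iff.rfl

theorem mem_edom_of_mem_realEpi {E : Type*} {f : E → EReal} {v : E} {t : ℝ}
    (h : (v, t) ∈ realEpi f) : v ∈ edom f :=
  lt_of_le_of_lt h (EReal.coe_lt_top t)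

theorem realEpi_nonempty {E : Type*} {f : E → EReal} (hf : ∃ x, f x ≠ ⊤) :
    (realEpi f).Nonempty :=
  hf.elim fun x hx ↦ ⟨(x, (f x).toReal), EReal.le_coe_toReal hx⟩

theorem convexEpi_iff {E : Type*} [AddCommGroup E] [Module ℝ E] {f : E → EReal} :
    ConvexEpi f ↔ Convex ℝ (realEpi f) := Iff.rfl

theorem coe_le_iff_forall_real {a : ℝ} {c : EReal} :
    (a : EReal) ≤ c ↔ ∀ t : ℝ, c ≤ (t : EReal) → a ≤ t :=
  ⟨fun h _ ht ↦ EReal.coe_le_coe_iff.1 (h.trans ht), fun h ↦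
    EReal.le_of_forall_lt_iff_le.1 fun t ht ↦ EReal.coe_le_coe_iff.2 (h t ht.le)⟩

theorem realEpi_smulE {E : Type*} {f : E → EReal} {c : ℝ} (hc : 0 < c) :
    realEpi (smulE c f) = (fun p ↦ (p.1, p.2 / c)) ⁻¹' realEpi f := by
  ext ⟨v, t⟩
  rw [mem_preimage, mem_realEpi, mem_realEpi, smulE, EReal.coe_div,
    EReal.le_div_iff_mul_le (EReal.coe_pos.2 hc) (EReal.coe_ne_top c), mul_comm]

theorem smulE_smulE {E : Type*} {f : E → EReal} (a b : ℝ) :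
    smulE a (smulE b f) = smulE (a * b) f := by
  ext v
  rw [smulE, smulE, smulE, EReal.coe_mul, mul_assoc]

theorem lowerSemicontinuous_iff_isClosed_realEpi {E : Type*} [TopologicalSpace E]
    {f : E → EReal} : LowerSemicontinuous f ↔ IsClosed (realEpi f) := by
  constructor
  · intro hf
    exact hf.isClosed_epigraph.preimage (f := fun p : E × ℝ ↦ (p.1, (p.2 : EReal)))
      (continuous_fst.prodMk (continuous_coe_real_ereal.comp continuous_snd))
  · intro hf
    refine lowerSemicontinuous_iff_isClosed_preimage.2 fun y ↦ ?_
    have sublevel_eq : f ⁻¹' Iic y = ⋂ (t : ℝ) (_ : y < t), {x | (x, t) ∈ realEpi f} := by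
      ext x
      simp only [mem_preimage, mem_Iic, mem_iInter]
      exact ⟨fun h t ht ↦ h.trans ht.le, fun h ↦ EReal.le_of_forall_lt_iff_le.1 h⟩
    rw [sublevel_eq]
    exact isClosed_iInter fun t ↦ isClosed_iInter fun _ ↦
      hf.preimage (continuous_id.prodMk continuous_const)

theorem convex_edom {E : Type*} [AddCommGroup E] [Module ℝ E] {f : E → EReal}
    (hf : ConvexEpi f) : Convex ℝ (edom f) := by
  have edom_eq : edom f = LinearMap.fst ℝ E ℝ '' realEpi f := by
    ext v
    constructor
    · exact fun hv ↦ ⟨(v, (f v).toReal), EReal.le_coe_toReal hv.ne, rfl⟩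
    · rintro ⟨⟨v, t⟩, hvt, rfl⟩
      exact mem_edom_of_mem_realEpi hvt
  exact edom_eq ▸ Convex.linear_image hf _

end RealEpigraph

section Conjugate

variable {E : Type*} [NormedAddCommGroup E] [InnerProductSpace ℝ E] {f : E → EReal}

theorem fconj_le_coe_iff {u : E} {r : ℝ} :
    fconj f u ≤ (r : EReal) ↔ ∀ p ∈ realEpi f, ⟪p.1, u⟫ - p.2 ≤ r := by
  have sub_le (x : E) : ((⟪x, u⟫ : ℝ) : EReal) - f x ≤ r ↔ ((⟪x, u⟫ - r : ℝ) : EReal) ≤ f x := by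
    rw [EReal.sub_le_iff_le_add (.inr (EReal.coe_ne_top r)) (.inr (EReal.coe_ne_bot r)),
      EReal.coe_sub,
      EReal.sub_le_iff_le_add (.inl (EReal.coe_ne_bot r)) (.inl (EReal.coe_ne_top r)), add_comm]
  simp only [fconj, iSup_le_iff, sub_le, coe_le_iff_forall_real, Prod.forall, mem_realEpi]
  exact forall₃_congr fun _ _ _ ↦ sub_le_comm

theorem realEpi_fconj :
    realEpi (fconj f) = ⋂ p ∈ realEpi f, {q : E × ℝ | ⟪p.1, q.1⟫ - p.2 ≤ q.2} := by
  ext ⟨u, r⟩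
  simp only [mem_realEpi, fconj_le_coe_iff, mem_iInter, mem_ofPred_eq]

theorem isClosed_realEpi_fconj : IsClosed (realEpi (fconj f)) := by
  rw [realEpi_fconj]
  exact isClosed_biInter fun p _ ↦ isClosed_le (by fun_prop) continuous_snd

theorem convexEpi_fconj : ConvexEpi (fconj f) := by
  rw [convexEpi_iff, realEpi_fconj]
  refine convex_iInter₂ fun p _ ↦ ?_
  have halfSpace_eq : {q : E × ℝ | ⟪p.1, q.1⟫ - p.2 ≤ q.2} =
      {q | ((innerₗ E p.1).comp (.fst ℝ E ℝ) - .snd ℝ E ℝ) q ≤ p.2} := by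
    ext q
    change ⟪p.1, q.1⟫ - p.2 ≤ q.2 ↔ ⟪p.1, q.1⟫ - q.2 ≤ p.2
    exact sub_le_comm
  exact halfSpace_eq ▸ convex_halfSpace_le (LinearMap.isLinear _) p.2

theorem fconj_fconj_le (x : E) : fconj (fconj f) x ≤ f x := by
  refine EReal.le_of_forall_lt_iff_le.1 fun r hr ↦ fconj_le_coe_iff.2 fun ⟨u, b⟩ hub ↦ ?_
  have := fconj_le_coe_iff.1 hub (x, r) hr.le
  rw [real_inner_comm]
  linarith

theorem ne_bot_of_fconj_ne_top {u : E} (hu : fconj f u ≠ ⊤) (x : E) : f x ≠ ⊥ := by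
  intro hx
  have := fconj_le_coe_iff.1 (EReal.le_coe_toReal hu) (x, ⟪x, u⟫ - (fconj f u).toReal - 1)
    (by simp [mem_realEpi, hx])
  linarith

theorem exists_ne_top_of_fconj_ne_bot {u : E} (hu : fconj f u ≠ ⊥) : ∃ x, f x ≠ ⊤ := by
  by_contra! h
  exact hu (by simp [fconj, h])

theorem isGamma0_fconj_of_exists_ne_top (hf : ∃ x, f x ≠ ⊤)
    (hf' : ∃ u, fconj f u ≠ ⊤) : IsGamma0 (fconj f) := by
  obtain ⟨x, hx⟩ := hf
  have fconj_fconj_ne_top : fconj (fconj f) x ≠ ⊤ :=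
    ((fconj_fconj_le x).trans_lt (lt_top_iff_ne_top.2 hx)).ne
  exact ⟨hf', ne_bot_of_fconj_ne_top fconj_fconj_ne_top,
    lowerSemicontinuous_iff_isClosed_realEpi.2 isClosed_realEpi_fconj, convexEpi_fconj⟩

end Conjugate

section FenchelMoreau

variable {E : Type*} [NormedAddCommGroup E] [InnerProductSpace ℝ E] {f : E → EReal}

theorem fconj_inv_smul_le {a : E} {β α : ℝ} (hβ : 0 < β)
    (h : ∀ p ∈ realEpi f, ⟪p.1, a⟫ - β * p.2 ≤ α) :
    fconj f (β⁻¹ • a) ≤ ((β⁻¹ * α : ℝ) : EReal) := by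
  refine fconj_le_coe_iff.2 fun p hp ↦ ?_
  calc ⟪p.1, β⁻¹ • a⟫ - p.2 = β⁻¹ * (⟪p.1, a⟫ - β * p.2) := by
        rw [inner_smul_right]; field_simp
    _ ≤ β⁻¹ * α := by gcongr; exact h p hp

theorem IsGamma0.closure_convexHull_realEpi (hf : IsGamma0 f) :
    closure (convexHull ℝ (realEpi f)) = realEpi f := by
  rw [(convexEpi_iff.1 hf.2.2.2).convexHull_eq,
    (lowerSemicontinuous_iff_isClosed_realEpi.1 hf.2.2.1).closure_eq]

variable [CompleteSpace E]

theorem exists_separating_of_notMem_closure_convexHull_realEpi (hf : ∃ x, f x ≠ ⊤) {q : E} {r : ℝ}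
    (hqr : (q, r) ∉ closure (convexHull ℝ (realEpi f))) :
    ∃ (a : E) (β α : ℝ), 0 ≤ β ∧ (∀ p ∈ realEpi f, ⟪p.1, a⟫ - β * p.2 ≤ α) ∧
      α < ⟪q, a⟫ - β * r := by
  obtain ⟨L, α, hL, hα⟩ := geometric_hahn_banach_closed_point
    (convex_convexHull ℝ _).closure isClosed_closure hqr
  set a : E := (InnerProductSpace.toDual ℝ E).symm (L.comp (.inl ℝ E ℝ))
  set b : ℝ := L (0, 1)
  have L_apply (p : E × ℝ) : L p = ⟪p.1, a⟫ - -b * p.2 := by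
    have hp : p = (p.1, (0 : ℝ)) + p.2 • ((0 : E), (1 : ℝ)) := by simp
    have ha : ⟪p.1, a⟫ = L (p.1, 0) := by
      rw [real_inner_comm, InnerProductSpace.toDual_symm_apply]; rfl
    conv_lhs => rw [hp, map_add, map_smul, smul_eq_mul, ← ha]
    ring
  have le_on_epi (p) (hp : p ∈ realEpi f) : ⟪p.1, a⟫ - -b * p.2 ≤ α :=
    L_apply p ▸ (hL p (subset_closure (subset_convexHull ℝ _ hp))).le
  refine ⟨a, -b, α, ?_, le_on_epi, L_apply (q, r) ▸ hα⟩
  -- A negative coefficient would make the left-hand side unbounded above along a vertical ray.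
  by_contra! hb
  obtain ⟨⟨x, t⟩, hxt⟩ := realEpi_nonempty hf
  obtain ⟨n, hn⟩ := exists_lt_nsmul (neg_neg_iff_pos.1 hb) (α - (⟪x, a⟫ - -b * t))
  have ray_mem : (x, t + n) ∈ realEpi f :=
    le_trans hxt (EReal.coe_le_coe_iff.2 (le_add_of_nonneg_right n.cast_nonneg))
  have := le_on_epi _ ray_mem
  rw [nsmul_eq_mul] at hn
  linarith

theorem mem_closure_convexHull_realEpi (hf : ∃ x, f x ≠ ⊤) (hf' : ∃ u, fconj f u ≠ ⊤)
    {q : E} {r : ℝ} (hqr : (q, r) ∈ realEpi (fconj (fconj f))) :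
    (q, r) ∈ closure (convexHull ℝ (realEpi f)) := by
  by_contra hmem
  obtain ⟨a, β, α, hβ, le_on_epi, hα⟩ :=
    exists_separating_of_notMem_closure_convexHull_realEpi hf hmem
  obtain ⟨⟨a₀, b₀⟩, hab⟩ := realEpi_nonempty hf'
  -- Tilting by a small multiple of the affine minorant `a₀` makes the hyperplane nonvertical.
  obtain ⟨ε, hε, ε_small⟩ := exists_pos_mul_lt (sub_pos.2 hα) (b₀ + r - ⟪q, a₀⟫)
  have hβε : 0 < β + ε := by positivity
  have tilted : ∀ p ∈ realEpi f, ⟪p.1, a + ε • a₀⟫ - (β + ε) * p.2 ≤ α + ε * b₀ := by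
    intro p hp
    have := mul_le_mul_of_nonneg_left (fconj_le_coe_iff.1 (mem_realEpi.1 hab) p hp) hε.le
    rw [inner_add_right, inner_smul_right]
    linarith [le_on_epi p hp]
  have := fconj_le_coe_iff.1 (mem_realEpi.1 hqr) (_, _) (fconj_inv_smul_le hβε tilted)
  rw [real_inner_comm, inner_smul_right, ← mul_sub, inv_mul_le_iff₀ hβε, inner_add_right,
    inner_smul_right] at this
  linarith

namespace IsGamma0

theorem exists_fconj_ne_top (hf : IsGamma0 f) : ∃ u, fconj f u ≠ ⊤ := by
  obtain ⟨x, hx⟩ := hf.1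
  lift f x to ℝ using ⟨hx, hf.2.1 x⟩ with r hr
  have below_graph : (x, r - 1) ∉ closure (convexHull ℝ (realEpi f)) := by
    rw [hf.closure_convexHull_realEpi, mem_realEpi, ← hr, EReal.coe_le_coe_iff]
    linarith
  obtain ⟨a, β, α, -, le_on_epi, hα⟩ :=
    exists_separating_of_notMem_closure_convexHull_realEpi hf.1 below_graph
  have hβ : 0 < β := by linarith [le_on_epi (x, r) hr.ge]
  exact ⟨β⁻¹ • a, ((fconj_inv_smul_le hβ le_on_epi).trans_lt (EReal.coe_lt_top _)).ne⟩

theorem isGamma0_fconj (hf : IsGamma0 f) : IsGamma0 (fconj f) :=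
  isGamma0_fconj_of_exists_ne_top hf.1 hf.exists_fconj_ne_top

theorem fconj_fconj (hf : IsGamma0 f) : fconj (fconj f) = f := by
  refine funext fun x ↦ le_antisymm (fconj_fconj_le x) ?_
  refine EReal.le_of_forall_lt_iff_le.1 fun r hr ↦ ?_
  rw [← mem_realEpi, ← hf.closure_convexHull_realEpi]
  exact mem_closure_convexHull_realEpi hf.1 hf.exists_fconj_ne_top hr.le

theorem apply_add_smul_le (hf : IsGamma0 f) {w z : E} {R a c : ℝ}
    (hw : ∀ u ∈ edom (fconj f), ⟪w, u⟫ ≤ R) (hz : f z ≤ (a : EReal)) (hc : 0 ≤ c) :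
    f (z + c • w) ≤ ((a + c * R : ℝ) : EReal) := by
  rw [← hf.fconj_fconj]
  refine fconj_le_coe_iff.2 fun ⟨u, b⟩ hub ↦ ?_
  have fenchelYoung : ⟪u, z⟫ - b ≤ a := by
    rw [real_inner_comm]
    linarith [fconj_le_coe_iff.1 hub (z, a) hz]
  have recession := mul_le_mul_of_nonneg_left (hw u (mem_edom_of_mem_realEpi hub)) hc
  rw [inner_add_right, inner_smul_right, real_inner_comm w]
  linarith

end IsGamma0

end FenchelMoreau

section Prox

variable {E : Type*} [NormedAddCommGroup E] [InnerProductSpace ℝ E] {f : E → EReal}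

/-- `u` is a subgradient of `f` at `p`: the affine function through `(p, f p)` with slope `u`
minorizes `f`. Used only at points where `f` is finite. -/
def HasSubgradientAt (f : E → EReal) (u p : E) : Prop :=
  ∀ v, f p + ((⟪u, v - p⟫ : ℝ) : EReal) ≤ f v

theorem hasSubgradientAt_iff_realEpi {u p : E} {r : ℝ} (hp : f p = (r : EReal)) :
    HasSubgradientAt f u p ↔ ∀ q ∈ realEpi f, r + ⟪u, q.1 - p⟫ ≤ q.2 := by
  simp only [HasSubgradientAt, hp, ← EReal.coe_add, coe_le_iff_forall_real, Prod.forall,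
    mem_realEpi]

theorem HasSubgradientAt.smulE {u p : E} {c : ℝ} (hc : 0 ≤ c) (h : HasSubgradientAt f u p) :
    HasSubgradientAt (smulE c f) (c • u) p := by
  intro v
  calc (c : EReal) * f p + ((⟪c • u, v - p⟫ : ℝ) : EReal)
      = c * (f p + ((⟪u, v - p⟫ : ℝ) : EReal)) := by
        rw [inner_smul_left, conj_trivial, EReal.coe_mul,
          EReal.left_distrib_of_nonneg_of_ne_top (EReal.coe_nonneg.2 hc) (EReal.coe_ne_top c)]
    _ ≤ c * f v := mul_le_mul_of_nonneg_left (h v) (EReal.coe_nonneg.2 hc)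

theorem apply_prox_add_le {x : E}
    (h : ∃ p, ∀ v, f p + ((‖x - p‖ ^ 2 / 2 : ℝ) : EReal) ≤ f v + ((‖x - v‖ ^ 2 / 2 : ℝ) : EReal))
    (v : E) : f (prox f x) + ((‖x - prox f x‖ ^ 2 / 2 : ℝ) : EReal) ≤
      f v + ((‖x - v‖ ^ 2 / 2 : ℝ) : EReal) :=
  Classical.epsilon_spec h v

/-- The objective `t + ‖x - v‖² / 2` at `(v, t)`; minimizing it over the epigraph of `f` amounts
to computing `prox f x`. -/
noncomputable def proxObjective (x : E) (p : E × ℝ) : ℝ := p.2 + ‖x - p.1‖ ^ 2 / 2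

theorem proxObjective_midpoint (x : E) (p q : E × ℝ) :
    proxObjective x (midpoint ℝ p q) =
      (proxObjective x p + proxObjective x q) / 2 - ‖p.1 - q.1‖ ^ 2 / 8 := by
  have sub_midpoint : x - (midpoint ℝ p q).1 = (2⁻¹ : ℝ) • ((x - p.1) + (x - q.1)) := by
    rw [midpoint_eq_smul_add, Prod.smul_fst, Prod.fst_add, invOf_eq_inv]
    module
  have midpoint_snd : (midpoint ℝ p q).2 = (p.2 + q.2) / 2 := by
    rw [midpoint_eq_smul_add, Prod.smul_snd, Prod.snd_add, invOf_eq_inv, smul_eq_mul]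
    ring
  have parallelogram := parallelogram_law_with_norm ℝ (x - p.1) (x - q.1)
  rw [sub_sub_sub_cancel_left, norm_sub_rev q.1] at parallelogram
  rw [proxObjective, proxObjective, proxObjective, sub_midpoint, midpoint_snd, norm_smul,
    Real.norm_of_nonneg (by norm_num)]
  linarith

theorem exists_isMinOn_proxObjective [CompleteSpace E] {K : Set (E × ℝ)} (hKc : IsClosed K)
    (hKconv : Convex ℝ K) (hK : K.Nonempty) {x : E} (hbdd : BddBelow (proxObjective x '' K)) :
    ∃ p ∈ K, IsMinOn (proxObjective x) K p := by
  set m := sInf (proxObjective x '' K)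
  have m_le {p} (hp : p ∈ K) : m ≤ proxObjective x p := csInf_le hbdd (mem_image_of_mem _ hp)
  obtain ⟨u, hu_anti, hu_lim, hu_mem⟩ := exists_seq_tendsto_sInf (hK.image _) hbdd
  choose p hpK hpu using hu_mem
  have dist_le (n k N : ℕ) (hn : N ≤ n) (hk : N ≤ k) :
      dist (p n).1 (p k).1 ≤ √(8 * (u N - m)) := by
    refine Real.le_sqrt_of_sq_le ?_
    have := m_le (hKconv.midpoint_mem (hpK n) (hpK k))
    rw [proxObjective_midpoint, hpu, hpu] at this
    rw [dist_eq_norm]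
    linarith [hu_anti hn, hu_anti hk]
  have radius_lim : Tendsto (fun N ↦ √(8 * (u N - m))) atTop (𝓝 0) := by
    have := ((hu_lim.sub_const m).const_mul 8).sqrt
    rwa [sub_self, mul_zero, Real.sqrt_zero] at this
  obtain ⟨v, hv⟩ := cauchySeq_tendsto_of_complete (cauchySeq_of_le_tendsto_0 _ dist_le radius_lim)
  have snd_eq (n : ℕ) : (p n).2 = u n - ‖x - (p n).1‖ ^ 2 / 2 :=
    eq_sub_of_add_eq (hpu n)
  have snd_lim : Tendsto (fun n ↦ (p n).2) atTop (𝓝 (m - ‖x - v‖ ^ 2 / 2)) := by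
    simp only [snd_eq]
    exact hu_lim.sub (((hv.const_sub x).norm.pow 2).div_const 2)
  refine ⟨_, hKc.mem_of_tendsto (hv.prodMk_nhds snd_lim) (.of_forall hpK), fun q hq ↦ ?_⟩
  simpa [proxObjective] using m_le hq

theorem prox_eq_of_hasSubgradientAt {x p : E} {r : ℝ} (hp : f p = (r : EReal))
    (h : HasSubgradientAt f (x - p) p) : prox f x = p := by
  have expand (v : E) : ‖x - v‖ ^ 2 = ‖x - p‖ ^ 2 - 2 * ⟪x - p, v - p⟫ + ‖v - p‖ ^ 2 := by
    rw [← norm_sub_sq_real, sub_sub_sub_cancel_right]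
  have p_isMin : ∀ v, f p + ((‖x - p‖ ^ 2 / 2 : ℝ) : EReal) ≤
      f v + ((‖x - v‖ ^ 2 / 2 : ℝ) : EReal) := by
    refine fun v ↦ le_trans ?_ (add_le_add_left (h v) _)
    rw [hp]
    norm_cast
    linarith [expand v, sq_nonneg ‖v - p‖]
  have := (add_le_add_left (h (prox f x)) _).trans (apply_prox_add_le ⟨p, p_isMin⟩ p)
  rw [hp] at this
  norm_cast at this
  have dist_eq : ‖prox f x - p‖ ^ 2 = 0 :=
    le_antisymm (by linarith [expand (prox f x)]) (sq_nonneg _)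
  exact sub_eq_zero.1 (norm_eq_zero.1 (pow_eq_zero_iff two_ne_zero |>.1 dist_eq))

namespace IsGamma0

variable [CompleteSpace E]

theorem bddBelow_proxObjective (hf : IsGamma0 f) (x : E) :
    BddBelow (proxObjective x '' realEpi f) := by
  obtain ⟨⟨u, b⟩, hub⟩ := realEpi_nonempty hf.exists_fconj_ne_top
  refine ⟨⟪x, u⟫ - b - ‖u‖ ^ 2 / 2, ?_⟩
  rintro _ ⟨⟨v, t⟩, hvt, rfl⟩
  have affine_le : ⟪v, u⟫ - b ≤ t := by
    linarith [fconj_le_coe_iff.1 (mem_realEpi.1 hub) (v, t) hvt]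
  have completed_square := norm_sub_sq_real (x - v) u
  rw [inner_sub_left] at completed_square
  rw [proxObjective]
  linarith [sq_nonneg ‖x - v - u‖]

theorem exists_isMinOn_prox (hf : IsGamma0 f) (x : E) :
    ∃ r : ℝ, f (prox f x) = (r : EReal) ∧
      IsMinOn (proxObjective x) (realEpi f) (prox f x, r) := by
  obtain ⟨⟨p, r⟩, hpr, hmin⟩ := exists_isMinOn_proxObjective
    (lowerSemicontinuous_iff_isClosed_realEpi.1 hf.2.2.1) (convexEpi_iff.1 hf.2.2.2)
    (realEpi_nonempty hf.1) (hf.bddBelow_proxObjective x)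
  have p_isMin : ∀ v, f p + ((‖x - p‖ ^ 2 / 2 : ℝ) : EReal) ≤
      f v + ((‖x - v‖ ^ 2 / 2 : ℝ) : EReal) := by
    intro v
    refine (add_le_add_left (mem_realEpi.1 hpr) _).trans ?_
    by_cases hv : f v = ⊤
    · rw [hv, EReal.top_add_coe]
      exact le_top
    · have v_mem : (v, (f v).toReal) ∈ realEpi f := EReal.le_coe_toReal hv
      rw [← EReal.coe_toReal hv (hf.2.1 v), ← EReal.coe_add, ← EReal.coe_add]
      exact EReal.coe_le_coe_iff.2 (hmin v_mem)
  have prox_le (q) (hq : q ∈ realEpi f) :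
      f (prox f x) + ((‖x - prox f x‖ ^ 2 / 2 : ℝ) : EReal) ≤ (proxObjective x q : ℝ) := by
    rw [proxObjective, EReal.coe_add]
    exact (apply_prox_add_le ⟨p, p_isMin⟩ q.1).trans (add_le_add_left hq _)
  have prox_ne_top : f (prox f x) ≠ ⊤ := fun htop ↦ by
    have := prox_le _ hpr
    rw [htop, EReal.top_add_coe] at this
    exact EReal.coe_ne_top _ (top_le_iff.1 this)
  lift f (prox f x) to ℝ using ⟨prox_ne_top, hf.2.1 _⟩ with r' hr'
  exact ⟨r', rfl, fun q hq ↦ EReal.coe_le_coe_iff.1 (prox_le q hq)⟩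

theorem prox_mem_edom (hf : IsGamma0 f) (x : E) : prox f x ∈ edom f := by
  obtain ⟨r, hr, -⟩ := hf.exists_isMinOn_prox x
  exact mem_edom_of_mem_realEpi hr.le

theorem hasSubgradientAt_prox (hf : IsGamma0 f) (x : E) :
    HasSubgradientAt f (x - prox f x) (prox f x) := by
  obtain ⟨r, hr, hmin⟩ := hf.exists_isMinOn_prox x
  refine (hasSubgradientAt_iff_realEpi hr).2 fun ⟨v, t⟩ hvt ↦ ?_
  set p := prox f x
  by_contra! hlt
  obtain ⟨l, hl, l_small⟩ := exists_pos_mul_lt (sub_pos.2 hlt)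
    (‖v - p‖ ^ 2 / 2 + (r + ⟪x - p, v - p⟫ - t))
  have l_le_one : l ≤ 1 := by
    refine (lt_of_mul_lt_mul_left ?_ (sub_pos.2 hlt).le).le
    nlinarith [mul_nonneg (sq_nonneg ‖v - p‖) hl.le]
  -- Compare the minimizer with a nearby point of the segment towards `(v, t)`.
  have segment_mem : (p, r) + l • ((v, t) - (p, r)) ∈ realEpi f :=
    (convexEpi_iff.1 hf.2.2.2).add_smul_sub_mem hr.le hvt ⟨hl.le, l_le_one⟩
  have sub_segment : x - (p + l • (v - p)) = x - p - l • (v - p) := sub_add_eq_sub_sub _ _ _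
  have obj_le : r + ‖x - p‖ ^ 2 / 2 ≤ r + l * (t - r) + ‖x - (p + l • (v - p))‖ ^ 2 / 2 :=
    hmin segment_mem
  rw [sub_segment, norm_sub_sq_real (x - p), inner_smul_right, norm_smul,
    Real.norm_of_nonneg hl.le] at obj_le
  nlinarith

end IsGamma0

end Prox

section Rscale

variable {E : Type*} [TopologicalSpace E] {f : E → EReal}

theorem rscale_of_ne_zero {ξ : ℝ} (hξ : ξ ≠ 0) : rscale ξ f = smulE ξ f := if_neg hξ

theorem realEpi_rscale_zero : realEpi (rscale 0 f) = closure (edom f) ×ˢ Ici 0 := by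
  ext ⟨v, t⟩
  by_cases hv : v ∈ closure (edom f) <;> simp [mem_realEpi, rscale, hv]

theorem rscale_zero_apply_of_mem {v : E} (hv : v ∈ closure (edom f)) : rscale 0 f v = 0 := by
  rw [rscale, if_pos rfl]
  exact if_pos hv

theorem edom_rscale_zero : edom (rscale 0 f) = closure (edom f) := by
  ext v
  rw [mem_edom]
  by_cases hv : v ∈ closure (edom f) <;> simp [rscale, hv]

theorem rscale_apply_of_mem_edom {ξ : ℝ} {v : E} (hv : v ∈ edom f) :
    rscale ξ f v = ξ * f v := by
  obtain rfl | hξ := eq_or_ne ξ 0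
  · rw [rscale_zero_apply_of_mem (subset_closure hv), EReal.coe_zero, zero_mul]
  · rw [rscale_of_ne_zero hξ, smulE]

end Rscale

section ProxRscale

variable {E : Type*} [NormedAddCommGroup E] [InnerProductSpace ℝ E] {f : E → EReal}

theorem prox_rscale_zero (hf : (edom f).Nonempty) (x : E) :
    prox (rscale 0 f) x = projC (closure (edom f)) x := by
  have rscale_add_le_iff (p v : E) : rscale 0 f p + ((‖x - p‖ ^ 2 / 2 : ℝ) : EReal) ≤
      rscale 0 f v + ((‖x - v‖ ^ 2 / 2 : ℝ) : EReal) ↔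
      v ∈ closure (edom f) → p ∈ closure (edom f) ∧ ‖x - p‖ ≤ ‖x - v‖ := by
    have sq_le_iff : ‖x - p‖ ^ 2 / 2 ≤ ‖x - v‖ ^ 2 / 2 ↔ ‖x - p‖ ≤ ‖x - v‖ := by
      rw [div_le_div_iff_of_pos_right two_pos, sq_le_sq₀ (norm_nonneg _) (norm_nonneg _)]
    by_cases hp : p ∈ closure (edom f) <;> by_cases hv : v ∈ closure (edom f) <;>
      simp only [rscale, hp, hv, if_true, if_false, EReal.top_add_coe, zero_add, le_top,
        EReal.coe_le_coe_iff, sq_le_iff, true_and, true_imp_iff, false_and, false_imp_iff,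
        top_le_iff, EReal.coe_ne_top]
  obtain ⟨v₀, hv₀⟩ := hf.closure
  refine congrArg Classical.epsilon (funext fun p ↦ propext ?_)
  simp only [rscale_add_le_iff]
  exact ⟨fun h ↦ ⟨(h v₀ hv₀).1, fun v hv ↦ (h v hv).2⟩, fun h v hv ↦ ⟨h.1, h.2 v hv⟩⟩

namespace IsGamma0

theorem isGamma0_smulE (hf : IsGamma0 f) {c : ℝ} (hc : 0 < c) : IsGamma0 (smulE c f) := by
  obtain ⟨⟨v, t⟩, hvt⟩ := realEpi_nonempty hf.1
  have hv : (v, c * t) ∈ realEpi (smulE c f) := by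
    rw [realEpi_smulE hc, mem_preimage, mul_div_cancel_left₀ _ hc.ne']
    exact hvt
  refine ⟨⟨v, (mem_edom_of_mem_realEpi hv).ne⟩, fun w hw ↦ ?_, ?_, ?_⟩
  · simp [smulE, EReal.mul_eq_bot, hf.2.1 w, hc.not_gt] at hw
  · rw [lowerSemicontinuous_iff_isClosed_realEpi, realEpi_smulE hc]
    exact (lowerSemicontinuous_iff_isClosed_realEpi.1 hf.2.2.1).preimage (by fun_prop)
  · rw [convexEpi_iff, realEpi_smulE hc]
    refine (convexEpi_iff.1 hf.2.2.2).is_linear_preimage ⟨fun p q ↦ ?_, fun a p ↦ ?_⟩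
    · simp [add_div]
    · simp [mul_div_assoc]

theorem isGamma0_rscale (hf : IsGamma0 f) {ξ : ℝ} (hξ : 0 ≤ ξ) : IsGamma0 (rscale ξ f) := by
  obtain rfl | hξ := hξ.eq_or_lt
  · obtain ⟨v₀, hv₀⟩ := hf.1
    refine ⟨⟨v₀, ?_⟩, fun v ↦ ?_, ?_, ?_⟩
    · rw [rscale_zero_apply_of_mem (subset_closure (lt_top_iff_ne_top.2 hv₀))]
      exact EReal.zero_ne_top
    · by_cases hv : v ∈ closure (edom f) <;> simp [rscale, hv]
    · rw [lowerSemicontinuous_iff_isClosed_realEpi, realEpi_rscale_zero]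
      exact isClosed_closure.prod isClosed_Ici
    · rw [convexEpi_iff, realEpi_rscale_zero]
      exact (convex_edom hf.2.2.2).closure.prod (convex_Ici 0)
  · rw [rscale_of_ne_zero hξ.ne']
    exact hf.isGamma0_smulE hξ

variable [CompleteSpace E]

theorem prox_rscale_mem_edom (hf : IsGamma0 f) {ξ : ℝ} (hξ : 0 < ξ) (x : E) :
    prox (rscale ξ f) x ∈ edom f := by
  have h := (hf.isGamma0_rscale hξ.le).prox_mem_edom x
  rw [rscale_of_ne_zero hξ.ne'] at h ⊢
  refine mem_edom.2 (lt_top_iff_ne_top.2 fun htop ↦ (mem_edom.1 h).ne ?_)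
  rw [smulE, htop, EReal.coe_mul_top_of_pos hξ]

theorem inner_sub_projC_le (hf : IsGamma0 f) (x : E) {v : E} (hv : v ∈ edom f) :
    ⟪x - projC (closure (edom f)) x, v - projC (closure (edom f)) x⟫ ≤ 0 := by
  have subgrad := (hf.isGamma0_rscale le_rfl).hasSubgradientAt_prox x v
  have proj_mem := (hf.isGamma0_rscale le_rfl).prox_mem_edom x
  rw [edom_rscale_zero] at proj_mem
  rw [rscale_zero_apply_of_mem proj_mem, rscale_zero_apply_of_mem (subset_closure hv), zero_add,
    prox_rscale_zero ⟨v, hv⟩] at subgrad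
  exact_mod_cast subgrad

-- Adding the subgradient inequalities of the two proximal points, each tested at the other one,
-- compares the two values of `f`.
theorem antitoneOn_apply_prox_rscale (hf : IsGamma0 f) (x : E) :
    AntitoneOn (fun ξ ↦ f (prox (rscale ξ f) x)) (Ici 0) := by
  intro ξ hξ ξ' hξ' hle
  obtain rfl | hlt := hle.eq_or_lt
  · exact le_rfl
  have subgrad := (hf.isGamma0_rscale hξ).hasSubgradientAt_prox x
  have subgrad' := (hf.isGamma0_rscale hξ').hasSubgradientAt_prox x
  have hp' := hf.prox_rscale_mem_edom (lt_of_le_of_lt hξ hlt) x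
  change f (prox (rscale ξ' f) x) ≤ f (prox (rscale ξ f) x)
  set p := prox (rscale ξ f) x
  set p' := prox (rscale ξ' f) x
  by_cases hp : f p = ⊤
  · exact hp ▸ le_top
  have ineq := subgrad p'
  have ineq' := subgrad' p
  rw [rscale_apply_of_mem_edom hp', rscale_apply_of_mem_edom (lt_top_iff_ne_top.2 hp)]
    at ineq ineq'
  lift f p to ℝ using ⟨hp, hf.2.1 p⟩ with r
  lift f p' to ℝ using ⟨hp'.ne, hf.2.1 p'⟩ with r'
  norm_cast at ineq ineq' ⊢
  have inner_add_inner : ⟪x - p, p' - p⟫ + ⟪x - p', p - p'⟫ = ‖p' - p‖ ^ 2 := by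
    rw [← neg_sub p' p, inner_neg_right, ← sub_eq_add_neg, ← inner_sub_left,
      sub_sub_sub_cancel_left, real_inner_self_eq_norm_sq]
  have : (ξ' - ξ) * r' ≤ (ξ' - ξ) * r := by linarith [sq_nonneg ‖p' - p‖]
  exact le_of_mul_le_mul_left this (sub_pos.2 hlt)

end IsGamma0

end ProxRscale

section PositivePart

theorem exists_eq_coe_of_mem_realEpi_phaut {G : Type*} {s : G → EReal} {v : G} {r : ℝ}
    (h : (v, r) ∈ realEpi (phaut s)) : ∃ ρ : ℝ, s v = (ρ : EReal) ∧ 0 < ρ ∧ ρ ≤ r := by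
  rw [mem_realEpi, phaut] at h
  split_ifs at h with hv
  · lift s v to ℝ using ⟨hv.2.ne, (EReal.bot_lt_zero.trans hv.1).ne'⟩ with ρ
    exact ⟨ρ, rfl, EReal.coe_pos.1 hv.1, EReal.coe_le_coe_iff.1 h⟩
  · exact absurd (top_le_iff.1 h) (EReal.coe_ne_top r)

variable {G : Type*} [NormedAddCommGroup G] [InnerProductSpace ℝ G] {s : G → EReal}

theorem hautEnv_le_coe {v : G} {ρ : ℝ} (hv : s v = (ρ : EReal)) (hρ : 0 < ρ) :
    hautEnv s v ≤ (ρ : EReal) := by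
  refine (fconj_fconj_le v).trans_eq ?_
  rw [phaut, if_pos (by simp [hv, hρ]), hv]

theorem fconj_phaut_zero_le : fconj (phaut s) 0 ≤ ((0 : ℝ) : EReal) := by
  refine fconj_le_coe_iff.2 fun ⟨v, r⟩ hvr ↦ ?_
  obtain ⟨ρ, -, hρ, hρr⟩ := exists_eq_coe_of_mem_realEpi_phaut hvr
  rw [inner_zero_right]
  linarith

theorem fconj_phaut_zero_ne_top : fconj (phaut s) 0 ≠ ⊤ :=
  (fconj_phaut_zero_le.trans_lt (EReal.coe_lt_top 0)).ne

theorem hautEnv_nonneg (v : G) : 0 ≤ hautEnv s v := by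
  refine EReal.le_of_forall_lt_iff_le.1 fun t ht ↦ ?_
  have := fconj_le_coe_iff.1 ht.le (0, 0) fconj_phaut_zero_le
  rw [inner_zero_left, sub_zero] at this
  exact EReal.coe_nonneg.2 this

theorem isGamma0_hautEnv {q : G} (hq : hautEnv s q ≠ ⊤) : IsGamma0 (hautEnv s) :=
  isGamma0_fconj_of_exists_ne_top ⟨0, fconj_phaut_zero_ne_top⟩ ⟨q, hq⟩

theorem mem_closure_convexHull_realEpi_phaut [CompleteSpace G] {q : G} {r : ℝ}
    (hqr : (q, r) ∈ realEpi (hautEnv s)) :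
    (q, r) ∈ closure (convexHull ℝ (realEpi (phaut s))) := by
  have fconj_ne_bot : fconj (phaut s) 0 ≠ ⊥ :=
    ne_bot_of_fconj_ne_top (mem_edom_of_mem_realEpi hqr).ne 0
  exact mem_closure_convexHull_realEpi (exists_ne_top_of_fconj_ne_bot fconj_ne_bot)
    ⟨0, fconj_phaut_zero_ne_top⟩ hqr

end PositivePart

section Perspective

theorem pairHG_sub_pairHG {H G : Type*} [AddCommGroup H] [AddCommGroup G] (u u' : H) (v v' : G) :
    pairHG u v - pairHG u' v' = pairHG (u - u') (v - v') := rfl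

theorem smul_pairHG {H G : Type*} [AddCommGroup H] [AddCommGroup G] [Module ℝ H] [Module ℝ G]
    (c : ℝ) (u : H) (v : G) : c • pairHG u v = pairHG (c • u) (c • v) := rfl

theorem mem_of_mem_closure_convexHull_of_exists_mem_Icc {G : Type*} [NormedAddCommGroup G]
    [NormedSpace ℝ G] {A T : Set (G × ℝ)} (hTc : IsClosed T) (hT : Convex ℝ T)
    (hAT : ∀ p ∈ A, ∃ ρ ∈ Icc 0 p.2, (p.1, ρ) ∈ T) {q : G}
    (hq : (q, (0 : ℝ)) ∈ closure (convexHull ℝ A)) : (q, (0 : ℝ)) ∈ T := by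
  set U : Set (G × ℝ) := {p | ∃ ρ ∈ Icc 0 p.2, (p.1, ρ) ∈ T}
  have convex_U : Convex ℝ U := by
    rintro ⟨v₁, r₁⟩ ⟨ρ₁, ⟨hρ₁, hρr₁⟩, h₁⟩ ⟨v₂, r₂⟩ ⟨ρ₂, ⟨hρ₂, hρr₂⟩, h₂⟩ a b ha hb hab
    refine ⟨a * ρ₁ + b * ρ₂, ⟨by positivity, ?_⟩, hT h₁ h₂ ha hb hab⟩
    exact add_le_add (mul_le_mul_of_nonneg_left hρr₁ ha) (mul_le_mul_of_nonneg_left hρr₂ hb)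
  have mem_closure_U : (q, (0 : ℝ)) ∈ closure U := closure_mono (convexHull_min hAT convex_U) hq
  obtain ⟨p, hpU, hp⟩ := mem_closure_iff_seq_limit.1 mem_closure_U
  choose ρ hρ hρT using hpU
  have hρ_lim : Tendsto ρ atTop (𝓝 0) :=
    squeeze_zero (fun n ↦ (hρ n).1) (fun n ↦ (hρ n).2) (hp.snd_nhds)
  exact hTc.mem_of_tendsto (hp.fst_nhds.prodMk_nhds hρ_lim) (.of_forall hρT)

variable {H G : Type*} [NormedAddCommGroup H] [InnerProductSpace ℝ H]
  [NormedAddCommGroup G] [InnerProductSpace ℝ G] {φ : H → EReal} {s : G → EReal}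

theorem inner_pairHG (p u : H) (b v : G) : ⟪pairHG p b, pairHG u v⟫ = ⟪p, u⟫ + ⟪b, v⟫ :=
  WithLp.prod_inner_apply _ _

theorem prePersp_pairHG {u : H} {v : G} {ρ : ℝ} (hv : s v = (ρ : EReal)) (hρ : 0 < ρ) :
    prePersp φ s (pairHG u v) = ρ * φ (ρ⁻¹ • u) := by
  change (if 0 < s v ∧ s v < ⊤ then s v * φ ((s v).toReal⁻¹ • u) else ⊤) = _
  rw [hv, if_pos (by simp [hρ]), EReal.toReal_coe]

theorem le_prePersp_pairHG {u : H} {v : G} {c : EReal}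
    (h : ∀ ρ : ℝ, s v = (ρ : EReal) → 0 < ρ → c ≤ ρ * φ (ρ⁻¹ • u)) :
    c ≤ prePersp φ s (pairHG u v) := by
  by_cases hv : 0 < s v ∧ s v < ⊤
  · have coe_toReal := (EReal.coe_toReal hv.2.ne (EReal.bot_lt_zero.trans hv.1).ne').symm
    have toReal_pos := EReal.toReal_pos hv.1 hv.2.ne
    exact (h _ coe_toReal toReal_pos).trans_eq (prePersp_pairHG coe_toReal toReal_pos).symm
  · exact le_of_le_of_eq le_top (if_neg hv).symm

theorem le_persp {g : WithLp 2 (H × G) → EReal} (hg : LowerSemicontinuous g)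
    (hg' : ConvexEpi g) (h : ∀ z, g z ≤ prePersp φ s z) (z : WithLp 2 (H × G)) :
    g z ≤ persp φ s z :=
  le_sSup ⟨g, hg, hg', h, rfl⟩

theorem inner_add_le_persp {a : WithLp 2 (H × G)} {c : ℝ}
    (h : ∀ u v, ((⟪a, pairHG u v⟫ + c : ℝ) : EReal) ≤ prePersp φ s (pairHG u v))
    (z : WithLp 2 (H × G)) : ((⟪a, z⟫ + c : ℝ) : EReal) ≤ persp φ s z := by
  refine le_persp (g := fun z ↦ ((⟪a, z⟫ + c : ℝ) : EReal)) (Continuous.lowerSemicontinuous ?_) ?_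
    (fun z ↦ h z.fst z.snd) z
  · exact continuous_coe_real_ereal.comp (by fun_prop)
  · have convexOn_affine : ConvexOn ℝ univ fun z ↦ ⟪a, z⟫ + c :=
      ((innerₗ _ a).convexOn convex_univ).add_const c
    simpa only [ConvexEpi, EReal.coe_le_coe_iff, mem_univ, true_and]
      using convexOn_affine.convex_epigraph

theorem inner_sub_le_mul_apply_inv_smul {p : H} {m ρ : ℝ} (hp : fconj φ p ≤ (m : EReal))
    (hρ : 0 < ρ) (u : H) : ((⟪p, u⟫ - ρ * m : ℝ) : EReal) ≤ ρ * φ (ρ⁻¹ • u) := by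
  refine coe_le_iff_forall_real.2 fun t ht ↦ ?_
  have mem_epi : (ρ⁻¹ • u, t) ∈ realEpi (smulE ρ φ) := ht
  rw [realEpi_smulE hρ] at mem_epi
  have fenchelYoung := fconj_le_coe_iff.1 hp _ mem_epi
  rw [real_inner_smul_left, real_inner_comm] at fenchelYoung
  field_simp at fenchelYoung
  linarith

theorem inner_sub_le_persp {p : H} {μ : ℝ} {b q : G} (hp : fconj φ p ≤ ((-μ : ℝ) : EReal))
    (hμ : 0 ≤ μ) (hq : hautEnv s q = 0) (hb : HasSubgradientAt (smulE μ (hautEnv s)) b q)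
    (z : WithLp 2 (H × G)) :
    ((⟪pairHG p b, z - pairHG 0 q⟫ : ℝ) : EReal) ≤ persp φ s z := by
  rw [inner_sub_right, sub_eq_add_neg]
  refine inner_add_le_persp (fun u v ↦ ?_) z
  refine le_prePersp_pairHG fun ρ hρs hρ ↦ ?_
  refine le_trans (EReal.coe_le_coe_iff.2 ?_) (inner_sub_le_mul_apply_inv_smul hp hρ u)
  have inner_le : ⟪b, v - q⟫ ≤ μ * ρ := by
    have := (hb v).trans (mul_le_mul_of_nonneg_left (hautEnv_le_coe hρs hρ)
      (EReal.coe_nonneg.2 hμ))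
    rw [smulE, hq, mul_zero, zero_add] at this
    exact_mod_cast this
  rw [inner_pairHG, inner_pairHG, inner_zero_right]
  rw [inner_sub_right] at inner_le
  linarith

variable [CompleteSpace H]

theorem prePersp_add_smul_le (hφ : IsGamma0 φ) {w z : H} {R a : ℝ}
    (hw : ∀ u ∈ edom (fconj φ), ⟪w, u⟫ ≤ R) (hz : φ z ≤ (a : EReal)) {v : G} {ρ : ℝ}
    (hv : s v = (ρ : EReal)) (hρ : 0 < ρ) :
    prePersp φ s (pairHG (ρ • z + w) v) ≤ ((ρ * a + R : ℝ) : EReal) := by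
  rw [prePersp_pairHG hv hρ, smul_add, inv_smul_smul₀ hρ.ne']
  have recession := hφ.apply_add_smul_le hw hz (inv_nonneg.2 hρ.le)
  refine (mul_le_mul_of_nonneg_left recession (EReal.coe_nonneg.2 hρ.le)).trans_eq ?_
  rw [← EReal.coe_mul, mul_add, mul_inv_cancel_left₀ hρ.ne']

theorem persp_le (hφ : IsGamma0 φ) {w : H} {R : ℝ} {q : G}
    (hw : ∀ u ∈ edom (fconj φ), ⟪w, u⟫ ≤ R)
    (hq : (q, (0 : ℝ)) ∈ closure (convexHull ℝ (realEpi (phaut s)))) :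
    persp φ s (pairHG w q) ≤ (R : EReal) := by
  refine sSup_le ?_
  rintro _ ⟨g, hg, hg', hle, rfl⟩
  obtain ⟨⟨z, a⟩, hza⟩ := realEpi_nonempty hφ.1
  set T : Set (G × ℝ) := {p | (pairHG (p.2 • z + w) p.1, p.2 * a + R) ∈ realEpi g}
  have isClosed_T : IsClosed T := by
    refine (lowerSemicontinuous_iff_isClosed_realEpi.1 hg).preimage
      (Continuous.prodMk ?_ (by fun_prop))
    exact (WithLp.prod_continuous_toLp 2 H G).comp (by fun_prop)
  have convex_T : Convex ℝ T := by
    intro p hp p' hp' c c' hc hc' hcc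
    obtain rfl : c' = 1 - c := eq_sub_of_add_eq' hcc
    have combo_eq : (pairHG ((c • p + (1 - c) • p').2 • z + w) (c • p + (1 - c) • p').1,
        (c • p + (1 - c) • p').2 * a + R) = c • (pairHG (p.2 • z + w) p.1, p.2 * a + R) +
          (1 - c) • (pairHG (p'.2 • z + w) p'.1, p'.2 * a + R) := by
      refine Prod.ext (congrArg (WithLp.toLp 2) (Prod.ext ?_ rfl)) ?_
      · change (c * p.2 + (1 - c) * p'.2) • z + w = c • (p.2 • z + w) + (1 - c) • (p'.2 • z + w)
        module
      · change (c * p.2 + (1 - c) * p'.2) * a + R = c * (p.2 * a + R) + (1 - c) * (p'.2 * a + R)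
        ring
    have combo_mem : (_, _) ∈ realEpi g := mem_of_eq_of_mem combo_eq (hg' hp hp' hc hc' hcc)
    exact combo_mem
  have mem_T (p) (hp : p ∈ realEpi (phaut s)) : ∃ ρ ∈ Icc 0 p.2, (p.1, ρ) ∈ T := by
    obtain ⟨ρ, hρs, hρ, hρp⟩ := exists_eq_coe_of_mem_realEpi_phaut hp
    exact ⟨ρ, ⟨hρ.le, hρp⟩, (hle _).trans (prePersp_add_smul_le hφ hw hza hρs hρ)⟩
  have := mem_of_mem_closure_convexHull_of_exists_mem_Icc isClosed_T convex_T mem_T hq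
  simpa [T, mem_realEpi] using this

variable [CompleteSpace G]

theorem persp_pairHG_eq_inner (hφ : IsGamma0 φ) {p w : H} {μ : ℝ} {b q : G}
    (hp : fconj φ p ≤ ((-μ : ℝ) : EReal)) (hμ : 0 ≤ μ)
    (hw : ∀ u ∈ edom (fconj φ), ⟪w, u⟫ ≤ ⟪w, p⟫) (hq : hautEnv s q = 0)
    (hb : HasSubgradientAt (smulE μ (hautEnv s)) b q) :
    persp φ s (pairHG w q) = (⟪w, p⟫ : ℝ) := by
  refine le_antisymm (persp_le hφ hw (mem_closure_convexHull_realEpi_phaut hq.le)) ?_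
  refine le_of_eq_of_le ?_ (inner_sub_le_persp hp hμ hq hb _)
  rw [pairHG_sub_pairHG, sub_zero, sub_self, inner_pairHG, inner_zero_right, add_zero,
    real_inner_comm]

theorem hasSubgradientAt_persp (hφ : IsGamma0 φ) {p w : H} {μ : ℝ} {b q : G}
    (hp : fconj φ p ≤ ((-μ : ℝ) : EReal)) (hμ : 0 ≤ μ)
    (hw : ∀ u ∈ edom (fconj φ), ⟪w, u⟫ ≤ ⟪w, p⟫) (hq : hautEnv s q = 0)
    (hb : HasSubgradientAt (smulE μ (hautEnv s)) b q) :
    HasSubgradientAt (persp φ s) (pairHG p b) (pairHG w q) := by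
  intro z
  refine le_of_eq_of_le ?_ (inner_sub_le_persp hp hμ hq hb z)
  rw [persp_pairHG_eq_inner hφ hp hμ hw hq hb, ← EReal.coe_add, inner_sub_right, inner_sub_right,
    inner_pairHG, inner_pairHG, inner_zero_right, real_inner_comm w]
  congr 1
  ring

end Perspective

section PerspectiveProx

variable {H G : Type*} [NormedAddCommGroup H] [InnerProductSpace ℝ H]
  [NormedAddCommGroup G] [InnerProductSpace ℝ G] {φ : H → EReal} {s : G → EReal}

theorem eta9eq_of_hautEnv_prox_eq_zero {γ μ : ℝ} {x : H} {y : G}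
    (hdom : (edom (fconj φ)).Nonempty)
    (hμ : fconj φ (projC (closure (edom (fconj φ))) (γ⁻¹ • x)) = ((-μ : ℝ) : EReal))
    (hq : hautEnv s (prox (rscale (γ * μ) (hautEnv s)) y) = 0) : eta9eq φ s γ x y μ := by
  rw [eta9eq, hq, EReal.toReal_zero, mul_zero, prox_rscale_zero hdom, hμ, ← EReal.coe_add,
    neg_add_cancel, EReal.coe_zero]

variable [CompleteSpace H] [CompleteSpace G]

theorem prox_smulE_persp (hφ : IsGamma0 φ) {γ μ : ℝ} (hγ : 0 < γ) (hμ : 0 < μ)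
    {x p : H} {y : G} (hp : fconj φ p ≤ ((-μ : ℝ) : EReal))
    (hpx : ∀ u ∈ edom (fconj φ), ⟪γ⁻¹ • x - p, u - p⟫ ≤ 0)
    (hq : hautEnv s (prox (smulE (γ * μ) (hautEnv s)) y) = 0) :
    prox (smulE γ (persp φ s)) (pairHG x y) =
      pairHG (x - γ • p) (prox (smulE (γ * μ) (hautEnv s)) y) := by
  set w := x - γ • p
  set q := prox (smulE (γ * μ) (hautEnv s)) y
  have inner_w_le (u) (hu : u ∈ edom (fconj φ)) : ⟪w, u⟫ ≤ ⟪w, p⟫ := by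
    have w_eq : w = γ • (γ⁻¹ • x - p) := by rw [smul_sub, smul_inv_smul₀ hγ.ne']
    rw [← sub_nonpos, ← inner_sub_right, w_eq, real_inner_smul_left]
    exact mul_nonpos_of_nonneg_of_nonpos hγ.le (hpx u hu)
  have subgrad_hautEnv : HasSubgradientAt (smulE μ (hautEnv s)) (γ⁻¹ • (y - q)) q := by
    have isGamma0 : IsGamma0 (smulE (γ * μ) (hautEnv s)) :=
      (isGamma0_hautEnv (hq.trans_ne EReal.zero_ne_top)).isGamma0_smulE (by positivity)
    have := (isGamma0.hasSubgradientAt_prox y).smulE (inv_nonneg.2 hγ.le)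
    rwa [smulE_smulE, inv_mul_cancel_left₀ hγ.ne'] at this
  have persp_eq := persp_pairHG_eq_inner hφ hp hμ.le inner_w_le hq subgrad_hautEnv
  refine prox_eq_of_hasSubgradientAt (r := γ * ⟪w, p⟫) ?_ ?_
  · rw [smulE, persp_eq, EReal.coe_mul]
  · have sub_eq : pairHG x y - pairHG w q = γ • pairHG p (γ⁻¹ • (y - q)) := by
      rw [pairHG_sub_pairHG, smul_pairHG, smul_inv_smul₀ hγ.ne', sub_sub_cancel]
    rw [sub_eq]
    exact (hasSubgradientAt_persp hφ hp hμ.le inner_w_le hq subgrad_hautEnv).smulE hγ.le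

theorem eq_of_eta9eq (hφ : IsGamma0 φ) {γ μ η : ℝ} (hγ : 0 < γ) (hμ₀ : 0 < μ) {x : H} {y : G}
    (hμ : fconj φ (projC (closure (edom (fconj φ))) (γ⁻¹ • x)) = ((-μ : ℝ) : EReal))
    (hq : hautEnv s (prox (rscale (γ * μ) (hautEnv s)) y) = 0) (hη : eta9eq φ s γ x y η) :
    η = μ := by
  have hdom : (edom (fconj φ)).Nonempty :=
    hφ.exists_fconj_ne_top.imp fun u ↦ lt_top_iff_ne_top.2
  rw [← prox_rscale_zero hdom] at hμ
  rw [eta9eq] at hη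
  set τ := (hautEnv s (prox (rscale (γ * η) (hautEnv s)) y)).toReal
  have τ_nonneg : 0 ≤ γ⁻¹ * τ :=
    mul_nonneg (inv_nonneg.2 hγ.le) (EReal.toReal_nonneg (hautEnv_nonneg _))
  have conj_le : fconj φ (prox (rscale (γ⁻¹ * τ) (fconj φ)) (γ⁻¹ • x)) ≤ ((-μ : ℝ) : EReal) :=
    hμ ▸ hφ.isGamma0_fconj.antitoneOn_apply_prox_rscale _ self_mem_Ici τ_nonneg τ_nonneg
  have le_η : μ ≤ η := by
    lift fconj φ (prox (rscale (γ⁻¹ * τ) (fconj φ)) (γ⁻¹ • x)) to ℝ using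
      ⟨(conj_le.trans_lt (EReal.coe_lt_top _)).ne, hφ.isGamma0_fconj.2.1 _⟩ with r
    norm_cast at hη conj_le
    linarith
  have τ_eq_zero : τ = 0 := by
    have hautEnv_le : hautEnv s (prox (rscale (γ * η) (hautEnv s)) y) ≤ 0 :=
      hq ▸ (isGamma0_hautEnv (hq.trans_ne EReal.zero_ne_top)).antitoneOn_apply_prox_rscale y
        (mem_Ici.2 (by positivity)) (mem_Ici.2 (mul_nonneg hγ.le (hμ₀.le.trans le_η)))
        (mul_le_mul_of_nonneg_left le_η hγ.le)
    exact (congrArg EReal.toReal (hautEnv_le.antisymm (hautEnv_nonneg _))).trans EReal.toReal_zero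
  rw [τ_eq_zero, mul_zero, hμ] at hη
  norm_cast at hη
  linarith

end PerspectiveProx

theorem stmt18_general {H G : Type*} [NormedAddCommGroup H] [InnerProductSpace ℝ H]
    [CompleteSpace H] [NormedAddCommGroup G] [InnerProductSpace ℝ G] [CompleteSpace G]
    (φ : H → EReal) (s : G → EReal) (hφ : IsGamma0 φ) (γ : ℝ) (hγ : 0 < γ) (x : H) (y : G)
    (hmem : (x, y) ∈ Xi3 φ s γ) :
    fconj φ (projC (closure (edom (fconj φ))) (γ⁻¹ • x)) < 0 ∧
    eta9eq φ s γ x y ((-(fconj φ (projC (closure (edom (fconj φ))) (γ⁻¹ • x)))).toReal) ∧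
    (∀ η : ℝ, 0 ≤ η → eta9eq φ s γ x y η →
        (η : EReal) = -(fconj φ (projC (closure (edom (fconj φ))) (γ⁻¹ • x)))) ∧
    prox (smulE γ (persp φ s)) (pairHG x y) =
      pairHG (x - γ • projC (closure (edom (fconj φ))) (γ⁻¹ • x))
        (prox (smulE (γ * (-(fconj φ (projC (closure (edom (fconj φ))) (γ⁻¹ • x)))).toReal)
          (hautEnv s)) y) := by
  obtain ⟨hq, hneg⟩ := hmem
  have hdom : (edom (fconj φ)).Nonempty :=
    ⟨_, mem_edom.2 (hneg.trans EReal.zero_lt_top)⟩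
  have hproj (u) (hu : u ∈ edom (fconj φ)) := hφ.isGamma0_fconj.inner_sub_projC_le (γ⁻¹ • x) hu
  obtain ⟨μ, hμ⟩ : ∃ μ : ℝ, fconj φ (projC (closure (edom (fconj φ))) (γ⁻¹ • x)) =
      ((-μ : ℝ) : EReal) := by
    lift fconj φ (projC (closure (edom (fconj φ))) (γ⁻¹ • x)) to ℝ using
      ⟨(hneg.trans EReal.zero_lt_top).ne, hφ.isGamma0_fconj.2.1 _⟩ with r
    exact ⟨-r, by rw [neg_neg]⟩
  have neg_eq : -((-μ : ℝ) : EReal) = μ := by rw [EReal.coe_neg, neg_neg]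
  have μ_pos : 0 < μ := by
    rw [hμ] at hneg
    exact neg_neg_iff_pos.1 (EReal.coe_neg'.1 hneg)
  simp only [hμ, neg_eq, EReal.toReal_coe] at hq hneg ⊢
  have hq' : hautEnv s (prox (rscale (γ * μ) (hautEnv s)) y) = 0 := by
    rwa [rscale_of_ne_zero (by positivity)]
  refine ⟨hneg, eta9eq_of_hautEnv_prox_eq_zero hdom hμ hq', fun η _ hη ↦ ?_,
    prox_smulE_persp hφ hγ μ_pos hμ.le hproj hq⟩
  rw [eq_of_eta9eq hφ hγ μ_pos hμ hq' hη]

/-- Proposition 4.3(iii). -/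
theorem stmt18 {H G : Type*} [NormedAddCommGroup H] [InnerProductSpace ℝ H] [CompleteSpace H]
    [NormedAddCommGroup G] [InnerProductSpace ℝ G] [CompleteSpace G]
    (φ : H → EReal) (s : G → EReal) (hφ : IsGamma0 φ)
    (hc1 : ∀ u : H, (⊥ < fconj φ u ∧ fconj φ u ≤ 0) ∨ fconj φ u = ⊤)
    (hc2 : ∃ u : H, ⊥ < fconj φ u ∧ fconj φ u < 0)
    (hs : IsGamma0 s)
    (hS : ∃ v : G, 0 < s v ∧ s v < ⊤)
    (γ : ℝ) (hγ : 0 < γ) (x : H) (y : G) (hmem : (x, y) ∈ Xi3 φ s γ) :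
    fconj φ (projC (closure (edom (fconj φ))) (γ⁻¹ • x)) < 0 ∧
    eta9eq φ s γ x y ((-(fconj φ (projC (closure (edom (fconj φ))) (γ⁻¹ • x)))).toReal) ∧
    (∀ η : ℝ, 0 ≤ η → eta9eq φ s γ x y η →
        (η : EReal) = -(fconj φ (projC (closure (edom (fconj φ))) (γ⁻¹ • x)))) ∧
    prox (smulE γ (persp φ s)) (pairHG x y) =
      pairHG (x - γ • projC (closure (edom (fconj φ))) (γ⁻¹ • x))
        (prox (smulE (γ * (-(fconj φ (projC (closure (edom (fconj φ))) (γ⁻¹ • x)))).toReal)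
          (hautEnv s)) y) :=
  stmt18_general φ s hφ γ hγ x y hmem
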